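/- Let λ be a p-core partition with at most m parts of length l(λ). Let 1 ≤ i < j ≤ l(λ) and let a, l ≥ 1 be integers with (λ+ρ)_i + (λ+ρ)_j = a + lp and (λ+ρ)_j − a > 0, and assume the vector v := s_{ε_i+ε_j,l}(λ+ρ) is regular. Then all entries of v are pairwise distinct and strictly positive; moreover the first l(λ) entries of v are all greater than m − l(λ). Consequently, if μ denotes the weakly decreasing rearrangement of v minus ρ, then μ is a partition with at most m parts satisfying μ_k ≤ λ_k for all k and μ ≠ λ, the rearrangement permutes only the first l(λ) coordinates, and μ is conjugate to λ under the dot action of W_p(D_{l(λ)}). -/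

import Mathlib

/-- ρ = (m, m-1, …, 1); with 0-indexed coordinates, ρ k = m - k. -/
def rho {m : ℕ} : Fin m → ℤ := fun k => (m : ℤ) - (k : ℕ)

/-- A partition with at most m parts: weakly decreasing and nonnegative entries. -/
def IsPartitionVec {m : ℕ} (lam : Fin m → ℤ) : Prop :=
  (∀ i j : Fin m, i ≤ j → lam j ≤ lam i) ∧ ∀ i, 0 ≤ lam i

/-- The length of a partition: the number of nonzero entries. -/
def plen {m : ℕ} (lam : Fin m → ℤ) : ℕ :=
  (Finset.univ.filter fun i => lam i ≠ 0).card

/-- A vector is regular if all entries are nonzero and no two entries have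
the same absolute value. -/
def Regular {m : ℕ} (v : Fin m → ℤ) : Prop :=
  (∀ k, v k ≠ 0) ∧ ∀ k k', k ≠ k' → |v k| ≠ |v k'|

/-- Affine reflection s_{ε_i−ε_j,l}: x ↦ x − a(e_i − e_j), a = x_i − x_j − lp. -/
def sMinus {m : ℕ} (p : ℤ) (i j : Fin m) (l : ℤ) (x : Fin m → ℤ) : Fin m → ℤ :=
  fun k => x k - (x i - x j - l * p) * ((if k = i then 1 else 0) - (if k = j then 1 else 0))

/-- Affine reflection s_{ε_i+ε_j,l}: x ↦ x − a(e_i + e_j), a = x_i + x_j − lp. -/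
def sPlus {m : ℕ} (p : ℤ) (i j : Fin m) (l : ℤ) (x : Fin m → ℤ) : Fin m → ℤ :=
  fun k => x k - (x i + x j - l * p) * ((if k = i then 1 else 0) + (if k = j then 1 else 0))

/-- Affine reflection s_{2ε_i,l}: x ↦ x − 2a·e_i, a = x_i − lp. -/
def sDouble {m : ℕ} (p : ℤ) (i : Fin m) (l : ℤ) (x : Fin m → ℤ) : Fin m → ℤ :=
  fun k => x k - 2 * (x i - l * p) * (if k = i then 1 else 0)

/-- λ is a p-core: for every i and every l ≥ 1 with (λ+ρ)_i − lp > 0, the number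
(λ+ρ)_i − lp occurs as an entry of λ+ρ. -/
def IsPCore {m : ℕ} (p : ℕ) (lam : Fin m → ℤ) : Prop :=
  ∀ (i : Fin m) (l : ℤ), 1 ≤ l → 0 < lam i + rho i - l * p →
    ∃ j : Fin m, lam j + rho j = lam i + rho i - l * p

/-- The affine reflection s_{ε_i−ε_j,l} as a bijection of ℤ^m. -/
def sMinusPerm {m : ℕ} (p : ℤ) (i j : Fin m) (h : i ≠ j) (l : ℤ) :
    Equiv.Perm (Fin m → ℤ) :=
  Function.Involutive.toPerm (sMinus p i j l) (by
    intro x; funext k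
    simp only [sMinus]
    by_cases hki : k = i <;> by_cases hkj : k = j <;>
      simp [hki, hkj, h, Ne.symm h] <;> ring)

/-- The affine reflection s_{ε_i+ε_j,l} as a bijection of ℤ^m. -/
def sPlusPerm {m : ℕ} (p : ℤ) (i j : Fin m) (h : i ≠ j) (l : ℤ) :
    Equiv.Perm (Fin m → ℤ) :=
  Function.Involutive.toPerm (sPlus p i j l) (by
    intro x; funext k
    simp only [sPlus]
    by_cases hki : k = i <;> by_cases hkj : k = j <;>
      simp [hki, hkj, h, Ne.symm h] <;> ring)

/-- The affine reflection s_{2ε_i,l} as a bijection of ℤ^m. -/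
def sDoublePerm {m : ℕ} (p : ℤ) (i : Fin m) (l : ℤ) :
    Equiv.Perm (Fin m → ℤ) :=
  Function.Involutive.toPerm (sDouble p i l) (by
    intro x; funext k
    simp only [sDouble]
    by_cases hki : k = i <;> simp [hki] <;> ring)

/-- Generators of W_p(D_s): the reflections s_{ε_i−ε_j,l} and s_{ε_i+ε_j,l}
for 1 ≤ i < j ≤ s (0-indexed: i < j, (j:ℕ) < s) and l ∈ ℤ. -/
def DGenerators (m : ℕ) (p : ℤ) (s : ℕ) : Set (Equiv.Perm (Fin m → ℤ)) :=
  {σ | ∃ (i j : Fin m) (l : ℤ) (h : i < j), (j : ℕ) < s ∧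
        (σ = sMinusPerm p i j h.ne l ∨ σ = sPlusPerm p i j h.ne l)}

/-- The affine Weyl group W_p(D_s). -/
def WpD (m : ℕ) (p : ℤ) (s : ℕ) : Subgroup (Equiv.Perm (Fin m → ℤ)) :=
  Subgroup.closure (DGenerators m p s)

/-- Generators of W_p(C_s): those of W_p(D_s) together with the reflections
s_{2ε_i,l} for 1 ≤ i ≤ s (0-indexed: (i:ℕ) < s) and l ∈ ℤ. -/
def CGenerators (m : ℕ) (p : ℤ) (s : ℕ) : Set (Equiv.Perm (Fin m → ℤ)) :=
  DGenerators m p s ∪ {σ | ∃ (i : Fin m) (l : ℤ), (i : ℕ) < s ∧ σ = sDoublePerm p i l}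

/-- The affine Weyl group W_p(C_s). -/
def WpC (m : ℕ) (p : ℤ) (s : ℕ) : Subgroup (Equiv.Perm (Fin m → ℤ)) :=
  Subgroup.closure (CGenerators m p s)

/-- μ and ν are conjugate under the dot action of the group G:
some element of G maps μ+ρ to ν+ρ. -/
def DotConj {m : ℕ} (G : Subgroup (Equiv.Perm (Fin m → ℤ))) (mu nu : Fin m → ℤ) : Prop :=
  ∃ g ∈ G, g (fun k => mu k + rho k) = fun k => nu k + rho k

/-!
Write `x = λ + ρ`. The reflection lowers `x i` and `x j` by `a`, keeps them positive and leaves the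
other entries alone, so `v < x`, and beyond the length of `λ` the entries of `v` are still those of
`ρ`, namely `m - l(λ), …, 1`. As the entries of `v` are distinct and positive, the first `l(λ)` of
them must exceed `m - l(λ)`. Sorting preserves the bound `v ≤ x`, because `x` is already
decreasing; this gives `μ ≤ λ`, and comparing sums gives `μ ≠ λ`. In particular `μ` vanishes beyond
`l(λ)`, so the sorting permutation moves only the first `l(λ)` coordinates and is a product of the
swaps `s_{ε_i−ε_j,0}`.
-/

section Rearrangement

variable {ι α : Type*}

theorem exists_le_and_le_apply_of_injective [LinearOrder ι] [LocallyFiniteOrderBot ι]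
    {f : ι → ι} (hf : Function.Injective f) (k : ι) : ∃ t ≤ k, k ≤ f t := by
  by_contra! hlt
  have hmaps : Set.MapsTo f (Finset.Iic k) (Finset.Iio k) := fun t ht => by
    simpa using hlt t (by simpa using ht)
  have hcard := Finset.card_le_card_of_injOn f hmaps hf.injOn
  rw [← Finset.Iio_insert, Finset.card_insert_of_notMem Finset.notMem_Iio_self] at hcard
  omega

theorem comp_le_of_le_of_antitone [LinearOrder ι] [LocallyFiniteOrderBot ι] [Preorder α]
    {v x : ι → α} {f : ι → ι} (hle : v ≤ x) (hx : Antitone x) (hf : Function.Injective f)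
    (hvf : Antitone (v ∘ f)) : v ∘ f ≤ x := fun k => by
  obtain ⟨t, htk, hkt⟩ := exists_le_and_le_apply_of_injective hf k
  calc v (f k) ≤ v (f t) := hvf htk
    _ ≤ x (f t) := hle (f t)
    _ ≤ x k := hx hkt

theorem comp_perm_ne_of_lt [Finite ι] [AddCommMonoid α] [PartialOrder α]
    [IsOrderedCancelAddMonoid α] {v x : ι → α} (hlt : v < x) (σ : Equiv.Perm ι) : v ∘ σ ≠ x := by
  rintro rfl
  cases nonempty_fintype ι
  exact (Fintype.sum_strictMono hlt).ne (Equiv.sum_comp σ v).symm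

end Rearrangement

section Partition

variable {m : ℕ} {lam : Fin m → ℤ}

theorem rho_pos (k : Fin m) : 0 < rho k := by
  simp only [rho]
  omega

theorem IsPartitionVec.add_rho_pos (hlam : IsPartitionVec lam) (k : Fin m) : 0 < lam k + rho k :=
  add_pos_of_nonneg_of_pos (hlam.2 k) (rho_pos k)

theorem IsPartitionVec.strictAnti_add_rho (hlam : IsPartitionVec lam) :
    StrictAnti (lam + rho) := by
  have hrho : StrictAnti (rho : Fin m → ℤ) := fun k k' (h : (k : ℕ) < k') => by
    simp only [rho]
    omega
  exact Antitone.add_strictAnti (fun k k' => hlam.1 k k') hrho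

theorem isPartitionVec_of_strictAnti_add_rho (hanti : StrictAnti (lam + rho))
    (hpos : ∀ k, 0 < lam k + rho k) : IsPartitionVec lam := by
  cases m with
  | zero => exact ⟨fun k => k.elim0, fun k => k.elim0⟩
  | succ n =>
    have hlam : Antitone lam := Fin.antitone_iff_succ_le.2 fun k => by
      have hstep : lam k.succ + rho k.succ < lam k.castSucc + rho k.castSucc :=
        hanti k.castSucc_lt_succ
      simp only [rho, Fin.val_succ, Fin.val_castSucc] at hstep
      omega
    refine ⟨fun k k' h => hlam h, fun k => le_trans ?_ (hlam (Fin.le_last k))⟩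
    have hlast := hpos (Fin.last n)
    simp only [rho, Fin.val_last] at hlast
    omega

theorem IsPartitionVec.eq_zero_of_plen_le (hlam : IsPartitionVec lam) {k : Fin m}
    (hk : plen lam ≤ (k : ℕ)) : lam k = 0 := by
  by_contra hne
  have hsub : Finset.Iic k ⊆ Finset.univ.filter fun i => lam i ≠ 0 := fun i hi => by
    have hki := hlam.1 i k (Finset.mem_Iic.1 hi)
    have hk0 := hlam.2 k
    simp only [Finset.mem_filter, Finset.mem_univ, true_and]
    omega
  have hcard : (k : ℕ) + 1 ≤ plen lam := Fin.card_Iic k ▸ Finset.card_le_card hsub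
  omega

theorem Regular.injective {v : Fin m → ℤ} (hv : Regular v) : Function.Injective v := by
  intro k k' h
  by_contra hne
  exact hv.2 k k' hne (congrArg _ h)

theorem sub_lt_of_injective_of_eq_rho {v : Fin m → ℤ} (hinj : Function.Injective v)
    (hpos : ∀ k, 0 < v k) {s : ℕ} (htail : ∀ k : Fin m, s ≤ (k : ℕ) → v k = rho k)
    {k : Fin m} (hk : (k : ℕ) < s) : (m : ℤ) - s < v k := by
  by_contra! hle
  have hvk := hpos k
  let t : Fin m := ⟨(m - v k).toNat, by omega⟩
  have ht : s ≤ (t : ℕ) := by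
    simp only [t]
    omega
  have hvt : v k = v t := by
    rw [htail t ht]
    simp only [rho, t]
    omega
  rw [hinj hvt] at hk
  omega

theorem apply_eq_self_of_eq_rho {v : Fin m → ℤ} (hinj : Function.Injective v)
    {f : Fin m → Fin m} (hlam : lam + rho = v ∘ f) {k : Fin m} (hk : lam k = 0)
    (hvk : v k = rho k) : f k = k := by
  apply hinj
  calc v (f k) = lam k + rho k := (congrFun hlam k).symm
    _ = v k := by rw [hk, zero_add, hvk]

end Partition

section Reflection

variable {m : ℕ} {p l : ℤ} {i j : Fin m} {x : Fin m → ℤ}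

theorem sPlus_apply_left (hij : i ≠ j) : sPlus p i j l x i = l * p - x j := by
  simp only [sPlus, if_true, if_neg hij]
  ring

theorem sPlus_apply_right (hij : i ≠ j) : sPlus p i j l x j = l * p - x i := by
  simp only [sPlus, if_true, if_neg hij.symm]
  ring

theorem sPlus_apply_of_ne {k : Fin m} (hki : k ≠ i) (hkj : k ≠ j) : sPlus p i j l x k = x k := by
  simp only [sPlus, if_neg hki, if_neg hkj, add_zero, mul_zero, sub_zero]

theorem IsPartitionVec.sPlus_add_rho_of_plen_le {lam : Fin m → ℤ} (hlam : IsPartitionVec lam)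
    (hi : (i : ℕ) < plen lam) (hj : (j : ℕ) < plen lam) {k : Fin m} (hk : plen lam ≤ (k : ℕ)) :
    sPlus p i j l (lam + rho) k = rho k := by
  rw [sPlus_apply_of_ne (by rintro rfl; omega) (by rintro rfl; omega), Pi.add_apply,
    hlam.eq_zero_of_plen_le hk, zero_add]

theorem sPlus_pos (hij : i ≠ j) (hx : ∀ k, 0 < x k) (hi : x i < l * p) (hj : x j < l * p)
    (k : Fin m) : 0 < sPlus p i j l x k := by
  obtain rfl | hki := eq_or_ne k i
  · exact sPlus_apply_left hij ▸ sub_pos.2 hj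
  obtain rfl | hkj := eq_or_ne k j
  · exact sPlus_apply_right hij ▸ sub_pos.2 hi
  exact sPlus_apply_of_ne hki hkj ▸ hx k

theorem sPlus_lt (hij : i ≠ j) (h : l * p < x i + x j) : sPlus p i j l x < x := by
  refine Pi.lt_def.2 ⟨fun k => ?_, i, sPlus_apply_left hij ▸ sub_lt_iff_lt_add.2 h⟩
  obtain rfl | hki := eq_or_ne k i
  · exact sPlus_apply_left hij ▸ (sub_lt_iff_lt_add.2 h).le
  obtain rfl | hkj := eq_or_ne k j
  · exact sPlus_apply_right hij ▸ (sub_lt_iff_lt_add'.2 h).le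
  exact (sPlus_apply_of_ne hki hkj).le

theorem sMinusPerm_zero (hij : i ≠ j) :
    sMinusPerm p i j hij 0 = (Equiv.swap i j).arrowCongr (Equiv.refl ℤ) := by
  ext x k
  change sMinus p i j 0 x k = x (Equiv.swap i j k)
  obtain rfl | hki := eq_or_ne k i
  · simp [sMinus, hij]
  obtain rfl | hkj := eq_or_ne k j
  · simp [sMinus, hki]
  simp [sMinus, hki, hkj, Equiv.swap_apply_of_ne_of_ne]

end Reflection

section WeylGroup

variable {m : ℕ} (p : ℤ) {s : ℕ}

theorem arrowCongr_swap_mem_WpD {i j : Fin m} (hij : i ≠ j) (hi : (i : ℕ) < s)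
    (hj : (j : ℕ) < s) : (Equiv.swap i j).arrowCongr (Equiv.refl ℤ) ∈ WpD m p s := by
  wlog hlt : i < j generalizing i j
  · rw [Equiv.swap_comm]
    exact this hij.symm hj hi (hij.lt_or_gt.resolve_left hlt)
  exact Subgroup.subset_closure ⟨i, j, 0, hlt, hj, .inl (sMinusPerm_zero hij).symm⟩

theorem arrowCongr_mem_WpD {σ : Equiv.Perm (Fin m)} (hσ : ∀ k : Fin m, s ≤ (k : ℕ) → σ k = k) :
    σ.arrowCongr (Equiv.refl ℤ) ∈ WpD m p s := by
  obtain ⟨τ, hτ⟩ := (Equiv.Perm.subtypeEquivSubtypePerm fun k : Fin m => (k : ℕ) < s).surjective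
    ⟨σ, fun k hk => hσ k (not_lt.1 hk)⟩
  obtain rfl : Equiv.Perm.ofSubtype τ = σ := congrArg Subtype.val hτ
  clear hσ hτ
  induction τ using Equiv.Perm.swap_induction_on with
  | one =>
    rw [map_one]
    exact one_mem _
  | swap_mul τ a b hab ih =>
    rw [map_mul, Equiv.Perm.ofSubtype_swap_eq]
    exact mul_mem (arrowCongr_swap_mem_WpD p (Subtype.coe_injective.ne hab) a.2 b.2) ih

theorem dotConj_of_add_rho_eq_sPlus_comp {lam mu : Fin m → ℤ} {i j : Fin m} {l : ℤ}
    (hij : i < j) (hj : (j : ℕ) < s) {σ : Equiv.Perm (Fin m)}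
    (hσ : ∀ k : Fin m, s ≤ (k : ℕ) → σ k = k)
    (hmu : mu + rho = sPlus p i j l (lam + rho) ∘ σ) : DotConj (WpD m p s) lam mu := by
  have hrefl : sPlusPerm p i j hij.ne l ∈ WpD m p s :=
    Subgroup.subset_closure ⟨i, j, l, hij, hj, .inr rfl⟩
  -- The inverse appears because `σ.arrowCongr (Equiv.refl ℤ)` maps `x` to `x ∘ σ⁻¹`.
  exact ⟨_, mul_mem (inv_mem (arrowCongr_mem_WpD p hσ)) hrefl, hmu.symm⟩

end WeylGroup

theorem statement4_general {m : ℕ} {p : ℤ} {lam : Fin m → ℤ} (hpart : IsPartitionVec lam)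
    {i j : Fin m} (hij : i < j) (hjlen : (j : ℕ) < plen lam)
    {a l : ℤ} (ha : 1 ≤ a)
    (heq : (lam i + rho i) + (lam j + rho j) = a + l * p)
    (hpos : 0 < (lam j + rho j) - a)
    {v : Fin m → ℤ} (hv : v = sPlus p i j l (fun t => lam t + rho t))
    (hreg : Regular v) :
    (∀ k k' : Fin m, k ≠ k' → v k ≠ v k') ∧
    (∀ k, 0 < v k) ∧
    (∀ k : Fin m, (k : ℕ) < plen lam → (m : ℤ) - (plen lam : ℤ) < v k) ∧
    ∀ (mu : Fin m → ℤ) (σ : Equiv.Perm (Fin m)),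
      (∀ k, mu k + rho k = v (σ k)) →
      (∀ k k' : Fin m, k ≤ k' → mu k' + rho k' ≤ mu k + rho k) →
      IsPartitionVec mu ∧ (∀ k, mu k ≤ lam k) ∧ mu ≠ lam ∧
      (∀ k : Fin m, plen lam ≤ (k : ℕ) → σ k = k) ∧
      DotConj (WpD m p (plen lam)) lam mu := by
  change v = sPlus p i j l (lam + rho) at hv
  have hx := hpart.strictAnti_add_rho
  have hji : lam j + rho j < lam i + rho i := hx hij
  have hi : lam i + rho i < l * p := by omega
  have hj : lam j + rho j < l * p := hji.trans hi
  have hsum : l * p < (lam i + rho i) + (lam j + rho j) := by omega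
  have hvpos : ∀ k, 0 < v k := hv ▸ sPlus_pos hij.ne hpart.add_rho_pos hi hj
  have hvlt : v < lam + rho := hv ▸ sPlus_lt hij.ne hsum
  have hvinj := hreg.injective
  have htail : ∀ k : Fin m, plen lam ≤ (k : ℕ) → v k = rho k := fun k hk =>
    hv ▸ hpart.sPlus_add_rho_of_plen_le (lt_trans hij hjlen) hjlen hk
  refine ⟨fun _ _ => hvinj.ne, hvpos, fun k => sub_lt_of_injective_of_eq_rho hvinj hvpos htail,
    fun mu σ hmu hanti => ?_⟩
  replace hmu : mu + rho = v ∘ σ := funext hmu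
  replace hanti : Antitone (mu + rho) := fun k k' => hanti k k'
  have hmupart : IsPartitionVec mu := isPartitionVec_of_strictAnti_add_rho
    (hanti.strictAnti_of_injective (hmu ▸ hvinj.comp σ.injective)) fun k =>
      (hvpos (σ k)).trans_eq (congrFun hmu k).symm
  have hmule : mu ≤ lam := le_of_add_le_add_right
    (hmu ▸ comp_le_of_le_of_antitone hvlt.le hx.antitone σ.injective (hmu ▸ hanti))
  have hfix : ∀ k : Fin m, plen lam ≤ (k : ℕ) → σ k = k := fun k hk =>
    apply_eq_self_of_eq_rho hvinj hmu
      (le_antisymm (hpart.eq_zero_of_plen_le hk ▸ hmule k) (hmupart.2 k)) (htail k hk)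
  exact ⟨hmupart, hmule, fun h => comp_perm_ne_of_lt hvlt σ (hmu ▸ h ▸ rfl), hfix,
    dotConj_of_add_rho_eq_sPlus_comp p hij hjlen hfix (hv ▸ hmu)⟩

theorem statement4 (m p : ℕ) (hp : p.Prime) (hodd : Odd p)
    (lam : Fin m → ℤ) (hpart : IsPartitionVec lam) (hcore : IsPCore p lam)
    (i j : Fin m) (hij : i < j) (hjlen : (j : ℕ) < plen lam)
    (a l : ℤ) (ha : 1 ≤ a) (hl : 1 ≤ l)
    (heq : (lam i + rho i) + (lam j + rho j) = a + l * p)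
    (hpos : 0 < (lam j + rho j) - a)
    (v : Fin m → ℤ) (hv : v = sPlus (p : ℤ) i j l (fun t => lam t + rho t))
    (hreg : Regular v) :
    (∀ k k' : Fin m, k ≠ k' → v k ≠ v k') ∧
    (∀ k, 0 < v k) ∧
    (∀ k : Fin m, (k : ℕ) < plen lam → (m : ℤ) - (plen lam : ℤ) < v k) ∧
    ∀ (mu : Fin m → ℤ) (σ : Equiv.Perm (Fin m)),
      (∀ k, mu k + rho k = v (σ k)) →
      (∀ k k' : Fin m, k ≤ k' → mu k' + rho k' ≤ mu k + rho k) →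
      IsPartitionVec mu ∧ (∀ k, mu k ≤ lam k) ∧ mu ≠ lam ∧
      (∀ k : Fin m, plen lam ≤ (k : ℕ) → σ k = k) ∧
      DotConj (WpD m (p : ℤ) (plen lam)) lam mu :=
  statement4_general hpart hij hjlen ha heq hpos hv hreg
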